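/- Assume either (α < 1 and α + ν > 2) or (1 < α < 3/2). Then there exists a constant C > 0 such that |δ_{kl}| ≤ C |a_α(k−l)| for all integers k, l ≥ 1. -/

import Mathlib

open MeasureTheory ProbabilityTheory Filter

noncomputable section

/-- Hypotheses (H.1) and (H.2) on the pair `(φ, ψ)`, together with the
parameter constraints `β ∈ (0,1)`, `λ > 0`, `α ∈ (0, 2β]`, `ν ∈ (1,2]`. -/
def SelfSimilarHyp (β lam α ν : ℝ) (φ ψ : ℝ → ℝ) : Prop :=
  β ∈ Set.Ioo (0 : ℝ) 1 ∧ 0 < lam ∧ α ∈ Set.Ioc (0 : ℝ) (2 * β) ∧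
  ν ∈ Set.Ioc (1 : ℝ) 2 ∧
  -- (H.1): φ(y) = −λ(y−1)^α + ψ(y) on [1,∞)
  (∀ y : ℝ, 1 ≤ y → φ y = -lam * (y - 1) ^ α + ψ y) ∧
  -- ψ is twice differentiable on an open set containing [1,∞)
  (∃ S : Set ℝ, IsOpen S ∧ Set.Ici (1 : ℝ) ⊆ S ∧
    ∀ y ∈ S, DifferentiableAt ℝ ψ y ∧ DifferentiableAt ℝ (deriv ψ) y) ∧
  -- bounds (a), (b) on ψ', ψ''
  (∃ C₀ : ℝ, 0 ≤ C₀ ∧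
    (∀ y : ℝ, 1 < y → |deriv ψ y| ≤ C₀ * y ^ (α - 1)) ∧
    (∀ y : ℝ, 1 < y → |deriv (deriv ψ) y| ≤ C₀ * y⁻¹ * (y - 1) ^ (α - 1))) ∧
  -- (c): ψ'(1) = βψ(1) when α ≥ 1
  (1 ≤ α → deriv ψ 1 = β * ψ 1) ∧
  -- (H.2): bounds (d), (e) on φ', φ'' for y ≥ 2
  (∃ C₁ : ℝ, 0 < C₁ ∧ ∀ y : ℝ, 2 ≤ y →
    ((α < 1 → |deriv φ y| ≤ C₁ * (y - 1) ^ (-ν) ∧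
        |deriv (deriv φ) y| ≤ C₁ * (y - 1) ^ (-ν - 1)) ∧
     (1 ≤ α → |deriv φ y| ≤ C₁ * (y - 1) ^ (α - 2) ∧
        |deriv (deriv φ) y| ≤ C₁ * (y - 1) ^ (α - 3))))

/-- The covariance function `R(s,t) = (s∧t)^{2β} φ((s∨t)/(s∧t))` for `s,t > 0`,
and `R(s,t) = 0` if `s = 0` or `t = 0`. -/
def covR (β : ℝ) (φ : ℝ → ℝ) (s t : ℝ) : ℝ :=
  if s = 0 ∨ t = 0 then 0 else (min s t) ^ (2 * β) * φ (max s t / min s t)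

/-- `Δ(k,l) = R(k+1,l+1) − R(k,l+1) − R(k+1,l) + R(k,l)`. -/
def covΔ (β : ℝ) (φ : ℝ → ℝ) (k l : ℕ) : ℝ :=
  covR β φ (k + 1) (l + 1) - covR β φ k (l + 1) - covR β φ (k + 1) l + covR β φ k l

/-- `δ_{kl} = Δ(k,l)/√(Δ(k,k)Δ(l,l))`. -/
def covδ (β : ℝ) (φ : ℝ → ℝ) (k l : ℕ) : ℝ :=
  covΔ β φ k l / Real.sqrt (covΔ β φ k k * covΔ β φ l l)

/-- For `m ∈ ℤ`, `a_α(m) = (1/2)(|m+1|^α + |m−1|^α − 2|m|^α)`. -/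
def aFun (α : ℝ) (m : ℤ) : ℝ :=
  (|(m : ℝ) + 1| ^ α + |(m : ℝ) - 1| ^ α - 2 * |(m : ℝ)| ^ α) / 2

/-!
The covariance `Δ(k, l)` is an average of the mixed derivative of `R` over a unit square, and by
self-similarity `∂²R/∂s∂t (s, t) = s ^ (2β - 2) χ(t / s)` for `s < t`. The bounds on the derivatives
of `φ` say that `|χ(y)|` is at most of order `(y - 1) ^ (α - 2)`, so `|Δ(k, l)|` is at most of order
`l ^ (2β - α) (k - l) ^ (α - 2)` when `l + 2 ≤ k`. Near the diagonal the mixed derivative is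
singular; there `Δ` is expressed by polarization through the increment variances
`V(s, t) = R(s, s) + R(t, t) - 2 R(s, t) = s ^ (2β) V(1, t / s)`, and `V(1, y) ~ 2λ (y - 1) ^ α` as
`y ↓ 1` shows that `Δ(k, k)` has exact order `k ^ (2β - α)` and extends the off-diagonal bound to
`k = l + 1`. Since `2β ≥ α`, the normalization `√(Δ(k, k) Δ(l, l))` is at least of order
`l ^ (2β - α)`, whence `|δ_{kl}|` is at most of order `(k - l) ^ (α - 2)`. This is the order of
`a_α(k - l)`, a second difference of `x ^ α`.
-/

open Asymptotics Set Topology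

/-! ### Calculus -/

lemma exists_mixed_difference_eq {f f₁ f₁₂ : ℝ → ℝ → ℝ} {a a' b b' : ℝ} (ha : a < a') (hb : b < b')
    (hf : ∀ y ∈ Icc b b', ContinuousOn (f · y) (Icc a a'))
    (hf₁ : ∀ x ∈ Ioo a a', ∀ y ∈ Icc b b', HasDerivAt (f · y) (f₁ x y) x)
    (hf₁₂ : ∀ x ∈ Ioo a a', ∀ y ∈ Icc b b', HasDerivAt (f₁ x) (f₁₂ x y) y) :
    ∃ x ∈ Ioo a a', ∃ y ∈ Ioo b b',
      f a' b' - f a b' - f a' b + f a b = f₁₂ x y * ((a' - a) * (b' - b)) := by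
  have hb_mem : b ∈ Icc b b' := left_mem_Icc.2 hb.le
  have hb'_mem : b' ∈ Icc b b' := right_mem_Icc.2 hb.le
  obtain ⟨x, hx, hfx⟩ := exists_hasDerivAt_eq_slope (fun x => f x b' - f x b)
    (fun x => f₁ x b' - f₁ x b) ha ((hf b' hb'_mem).sub (hf b hb_mem))
    fun x hx => (hf₁ x hx b' hb'_mem).sub (hf₁ x hx b hb_mem)
  obtain ⟨y, hy, hfy⟩ := exists_hasDerivAt_eq_slope (f₁ x) (f₁₂ x) hb
    (fun y hy => (hf₁₂ x hx y hy).continuousAt.continuousWithinAt)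
    fun y hy => hf₁₂ x hx y (Ioo_subset_Icc_self hy)
  have ha' : a' - a ≠ 0 := (sub_pos.2 ha).ne'
  have hb' : b' - b ≠ 0 := (sub_pos.2 hb).ne'
  refine ⟨x, hx, y, hy, ?_⟩
  rw [hfy, hfx]
  field_simp
  ring

lemma isBigO_sub_sub_deriv_mul {f : ℝ → ℝ} {x₀ : ℝ} (hf : ∀ᶠ x in 𝓝 x₀, DifferentiableAt ℝ f x)
    (hf' : DifferentiableAt ℝ (deriv f) x₀) :
    (fun x => f x - f x₀ - deriv f x₀ * (x - x₀)) =O[𝓝 x₀] fun x => (x - x₀) ^ 2 := by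
  obtain ⟨ε, hε, hball⟩ := Metric.eventually_nhds_iff_ball.1 hf
  set c := deriv (deriv f) x₀
  have hderiv : ∀ x ∈ Metric.ball x₀ ε,
      HasDerivWithinAt (fun x => f x - deriv f x₀ * (x - x₀) - c / 2 * (x - x₀) ^ 2)
        (deriv f x - deriv f x₀ - (x - x₀) * c) (Metric.ball x₀ ε) x := by
    intro x hx
    have hid : HasDerivAt (fun x => x - x₀) 1 x := (hasDerivAt_id x).sub_const x₀
    refine (((hball x hx).hasDerivAt.sub (hid.const_mul _)).sub
      ((hid.pow 2).const_mul (c / 2))).hasDerivWithinAt.congr_deriv ?_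
    push_cast
    ring
  have hsmall : (fun x => deriv f x - deriv f x₀ - (x - x₀) * c)
      =o[𝓝[Metric.ball x₀ ε] x₀] fun x => (x - x₀) ^ 1 := by
    simpa only [pow_one, smul_eq_mul] using
      (hasDerivAt_iff_isLittleO.1 hf'.hasDerivAt).mono nhdsWithin_le_nhds
  have hpeano := (convex_ball x₀ ε).isLittleO_pow_succ_real (Metric.mem_ball_self hε) hderiv hsmall
  rw [Metric.isOpen_ball.nhdsWithin_eq (Metric.mem_ball_self hε)] at hpeano
  refine (hpeano.isBigO.add ((isBigO_refl _ _).const_mul_left (c / 2))).congr_left fun x => ?_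
  ring

lemma isBigO_rpow_sub_one_sub_mul (p : ℝ) :
    (fun x : ℝ => x ^ p - 1 - p * (x - 1)) =O[𝓝 1] fun x => (x - 1) ^ 2 := by
  have hne : ∀ᶠ x : ℝ in 𝓝 1, x ≠ 0 := eventually_ne_nhds one_ne_zero
  have hdiff (q : ℝ) {x : ℝ} (hx : x ≠ 0) : DifferentiableAt ℝ (fun x : ℝ => x ^ q) x :=
    (Real.hasDerivAt_rpow_const (.inl hx)).differentiableAt
  have hderiv : deriv (fun x : ℝ => x ^ p) =ᶠ[𝓝 1] fun x => p * x ^ (p - 1) :=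
    hne.mono fun x hx => (Real.hasDerivAt_rpow_const (.inl hx)).deriv
  have h := isBigO_sub_sub_deriv_mul (hne.mono fun x hx => hdiff p hx)
    (((hdiff (p - 1) one_ne_zero).const_mul p).congr_of_eventuallyEq hderiv)
  simpa only [hderiv.eq_of_nhds, Real.one_rpow, mul_one] using h

lemma isLittleO_sub_rpow_nhdsGT (a : ℝ) {p q : ℝ} (hpq : p < q) :
    (fun x => (x - a) ^ q) =o[𝓝[>] a] fun x => (x - a) ^ p := by
  have hlim : Tendsto (fun x => (x - a) ^ (q - p)) (𝓝[>] a) (𝓝 0) := by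
    have hcont : ContinuousAt (fun x => (x - a) ^ (q - p)) a :=
      (continuousAt_id.sub continuousAt_const).rpow_const (.inr (sub_pos.2 hpq).le)
    simpa [Real.zero_rpow (sub_pos.2 hpq).ne'] using hcont.tendsto.mono_left nhdsWithin_le_nhds
  refine ((isBigO_refl (fun x => (x - a) ^ p) _).mul_isLittleO
    ((isLittleO_one_iff ℝ).2 hlim)).congr' ?_ (by simp)
  filter_upwards [self_mem_nhdsWithin] with x hx
  rw [← Real.rpow_add (sub_pos.2 hx), add_sub_cancel]

/-! ### The second differences `aFun` -/

lemma aFun_neg (α : ℝ) (m : ℤ) : aFun α (-m) = aFun α m := by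
  have h₁ : |-(m : ℝ) + 1| = |(m : ℝ) - 1| := by rw [← abs_neg]; ring_nf
  have h₂ : |-(m : ℝ) - 1| = |(m : ℝ) + 1| := by rw [← abs_neg]; ring_nf
  simp only [aFun, Int.cast_neg, abs_neg, h₁, h₂]
  ring

lemma aFun_zero {α : ℝ} (hα : α ≠ 0) : aFun α 0 = 1 := by
  simp [aFun, Real.zero_rpow hα]

lemma exists_aFun_eq {α : ℝ} (hα : 0 ≤ α) {m : ℤ} (hm : 1 ≤ m) :
    ∃ ξ ∈ Ioo ((m : ℝ) - 1) (m + 1), aFun α m = α * (α - 1) / 2 * ξ ^ (α - 2) := by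
  have hm' : (1 : ℝ) ≤ m := mod_cast hm
  have hderiv (p x y : ℝ) (h : 0 < m - 1 + x + y) :
      HasDerivAt (fun z : ℝ => z ^ p) (p * (m - 1 + x + y) ^ (p - 1)) (m - 1 + x + y) :=
    Real.hasDerivAt_rpow_const (.inl h.ne')
  obtain ⟨x, hx, y, hy, hxy⟩ := exists_mixed_difference_eq
    (f := fun x y => (m - 1 + x + y) ^ α) (f₁ := fun x y => α * (m - 1 + x + y) ^ (α - 1))
    (f₁₂ := fun x y => α * ((α - 1) * (m - 1 + x + y) ^ (α - 1 - 1)))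
    zero_lt_one zero_lt_one
    (fun y _ => ((continuous_const.add continuous_id).add continuous_const).rpow_const
      (fun _ => .inr hα) |>.continuousOn)
    (fun x hx y hy => ((hderiv α x y (by linarith [hx.1, hy.1])).comp_add_const
      (m - 1 + x) y).comp_const_add (m - 1 : ℝ) x)
    (fun x hx y hy => ((hderiv (α - 1) x y (by linarith [hx.1, hy.1])).comp_const_add
      (m - 1 + x) y).const_mul α)
  refine ⟨m - 1 + x + y, ⟨by linarith [hx.1, hy.1], by linarith [hx.2, hy.2]⟩, ?_⟩
  rw [aFun, abs_of_nonneg (by linarith : (0 : ℝ) ≤ m + 1),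
    abs_of_nonneg (by linarith : (0 : ℝ) ≤ m - 1), abs_of_nonneg (by linarith : (0 : ℝ) ≤ m),
    show α - 2 = α - 1 - 1 by ring]
  ring_nf at hxy ⊢
  linarith

lemma mul_rpow_le_abs_aFun {α : ℝ} (h₀ : 0 ≤ α) (h₂ : α ≤ 2) {m : ℤ} (hm : 1 ≤ m) :
    |α * (α - 1) / 2| * (2 * m : ℝ) ^ (α - 2) ≤ |aFun α m| := by
  have hm' : (1 : ℝ) ≤ m := mod_cast hm
  obtain ⟨ξ, hξ, h⟩ := exists_aFun_eq h₀ hm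
  have hξ₀ : 0 < ξ := by linarith [hξ.1]
  rw [h, abs_mul, abs_of_pos (Real.rpow_pos_of_pos hξ₀ _)]
  gcongr ?_ * ?_
  exact Real.rpow_le_rpow_of_nonpos hξ₀ (by linarith [hξ.2]) (by linarith)

lemma exists_rpow_le_abs_aFun {α : ℝ} (h₀ : 0 < α) (h₂ : α ≤ 2) (h₁ : α ≠ 1) :
    ∃ C, 0 < C ∧ ∀ m : ℤ, 1 ≤ m → (m : ℝ) ^ (α - 2) ≤ C * |aFun α m| := by
  have hc : 0 < |α * (α - 1) / 2| * (2 : ℝ) ^ (α - 2) := by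
    have := sub_ne_zero.2 h₁
    positivity
  refine ⟨_, inv_pos.2 hc, fun m hm => ?_⟩
  have hm₀ : (0 : ℝ) ≤ m := mod_cast zero_le_one.trans hm
  rw [← div_eq_inv_mul, le_div_iff₀' hc, mul_assoc, ← Real.mul_rpow zero_le_two hm₀]
  exact mul_rpow_le_abs_aFun h₀.le h₂ hm

/-! ### Self-similar covariances -/

section Covariance

variable {β : ℝ} {φ : ℝ → ℝ}

lemma covR_comm (s t : ℝ) : covR β φ s t = covR β φ t s := by
  simp only [covR, min_comm s t, max_comm s t, or_comm (a := s = 0)]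

lemma covR_of_le {s t : ℝ} (hs : 0 < s) (hst : s ≤ t) :
    covR β φ s t = s ^ (2 * β) * φ (t / s) := by
  have hne : ¬(s = 0 ∨ t = 0) := not_or.2 ⟨hs.ne', (hs.trans_le hst).ne'⟩
  rw [covR, if_neg hne, min_eq_left hst, max_eq_right hst]

lemma covR_self {s : ℝ} (hs : 0 < s) : covR β φ s s = s ^ (2 * β) * φ 1 := by
  rw [covR_of_le hs le_rfl, div_self hs.ne']

lemma covΔ_comm (k l : ℕ) : covΔ β φ k l = covΔ β φ l k := by
  rw [covΔ, covΔ, covR_comm (k + 1) (l + 1), covR_comm k (l + 1), covR_comm (k + 1) l,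
    covR_comm (k : ℝ) l]
  ring

lemma covδ_comm (k l : ℕ) : covδ β φ k l = covδ β φ l k := by
  rw [covδ, covδ, covΔ_comm, mul_comm]

lemma covδ_self {k : ℕ} (hk : 0 < covΔ β φ k k) : covδ β φ k k = 1 := by
  rw [covδ, Real.sqrt_mul_self hk.le, div_self hk.ne']

variable (β φ) in
/-- The variance `E (X t - X s) ^ 2` of an increment of a centred process `X` with covariance
function `covR β φ`. By polarization it determines `covΔ`. -/
def incrVar (s t : ℝ) : ℝ := covR β φ s s + covR β φ t t - 2 * covR β φ s t

lemma covΔ_self_eq_incrVar (k : ℕ) : covΔ β φ k k = incrVar β φ k (k + 1) := by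
  rw [covΔ, incrVar, covR_comm ((k : ℝ) + 1) k]
  ring

lemma covΔ_succ_left_eq_incrVar (l : ℕ) :
    covΔ β φ (l + 1) l =
      (incrVar β φ l (l + 2) - incrVar β φ l (l + 1) - incrVar β φ (l + 1) (l + 1 + 1)) / 2 := by
  have hl : (l : ℝ) + 1 + 1 = l + 2 := by ring
  simp only [covΔ, incrVar, Nat.cast_add_one, hl, covR_comm ((l : ℝ) + 2),
    covR_comm (l + 1) (l : ℝ)]
  ring

lemma incrVar_one {y : ℝ} (hy : 1 ≤ y) :
    incrVar β φ 1 y = (y ^ (2 * β) + 1) * φ 1 - 2 * φ y := by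
  rw [incrVar, covR_self one_pos, covR_self (one_pos.trans_le hy), covR_of_le one_pos hy,
    Real.one_rpow, div_one]
  ring

lemma incrVar_eq_rpow_mul {s t : ℝ} (hs : 0 < s) (hst : s ≤ t) :
    incrVar β φ s t = s ^ (2 * β) * incrVar β φ 1 (t / s) := by
  have ht : 0 < t := hs.trans_le hst
  rw [incrVar_one ((one_le_div hs).2 hst), incrVar, covR_self hs, covR_self ht, covR_of_le hs hst,
    Real.div_rpow ht.le hs.le]
  have := Real.rpow_pos_of_pos hs (2 * β)
  field_simp
  ring

lemma incrVar_isEquivalent_atTop {α c h : ℝ} (hh : 0 < h)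
    (hV : incrVar β φ 1 ~[𝓝[>] 1] fun y => c * (y - 1) ^ α) :
    (fun s => incrVar β φ s (s + h)) ~[atTop] fun s => c * h ^ α * s ^ (2 * β - α) := by
  have hlim : Tendsto (fun s : ℝ => (s + h) / s) atTop (𝓝[>] 1) := by
    refine tendsto_nhdsWithin_iff.2 ⟨?_, ?_⟩
    · have hdiv : Tendsto (fun s : ℝ => 1 + h / s) atTop (𝓝 (1 + 0)) :=
        (tendsto_id.const_div_atTop h).const_add 1
      rw [add_zero] at hdiv
      refine hdiv.congr' ?_
      filter_upwards [eventually_ne_atTop 0] with s hs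
      field_simp
    · filter_upwards [eventually_gt_atTop 0] with s hs
      exact (one_lt_div hs).2 (by linarith)
  refine ((IsEquivalent.refl (u := fun s : ℝ => s ^ (2 * β))).mul
    (hV.comp_tendsto hlim)).congr_left ?_ |>.congr_right ?_
  all_goals
    filter_upwards [eventually_gt_atTop 0] with s hs
    simp only [Pi.mul_apply, Function.comp_apply]
  · exact (incrVar_eq_rpow_mul hs (by linarith)).symm
  · rw [show (s + h) / s - 1 = h / s by field_simp; ring, Real.div_rpow hh.le hs.le,
      Real.rpow_sub hs]
    ring

lemma covΔ_self_isTheta {α c : ℝ} (hc : c ≠ 0)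
    (hV : incrVar β φ 1 ~[𝓝[>] 1] fun y => c * (y - 1) ^ α) :
    (fun k : ℕ => covΔ β φ k k) =Θ[atTop] fun k => (k : ℝ) ^ (2 * β - α) := by
  have h := ((incrVar_isEquivalent_atTop one_pos hV).comp_tendsto
    tendsto_natCast_atTop_atTop).isTheta
  simpa only [Function.comp_def, ← covΔ_self_eq_incrVar, Real.one_rpow, mul_one,
    isTheta_const_mul_right hc] using h

lemma covΔ_succ_left_isBigO {α c : ℝ} (hα : α ≤ 2 * β)
    (hV : incrVar β φ 1 ~[𝓝[>] 1] fun y => c * (y - 1) ^ α) :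
    (fun l : ℕ => covΔ β φ (l + 1) l) =O[atTop] fun l => (l : ℝ) ^ (2 * β - α) := by
  have hincr {h : ℝ} (hh : 0 < h) :
      (fun l : ℕ => incrVar β φ l (l + h)) =O[atTop] fun l => (l : ℝ) ^ (2 * β - α) :=
    ((incrVar_isEquivalent_atTop hh hV).comp_tendsto
      tendsto_natCast_atTop_atTop).isBigO.trans ((isBigO_refl _ _).const_mul_left _)
  have hsucc : (fun l : ℕ => (l : ℝ) + 1) =O[atTop] fun l => (l : ℝ) :=
    (isBigO_refl _ _).add
      ((isLittleO_const_id_atTop 1).comp_tendsto tendsto_natCast_atTop_atTop).isBigO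
  have hshift : (fun l : ℕ => incrVar β φ (l + 1) (l + 1 + 1))
      =O[atTop] fun l => (l : ℝ) ^ (2 * β - α) := by
    refine IsBigO.trans ?_
      (hsucc.rpow (sub_nonneg.2 hα) (Eventually.of_forall fun l => Nat.cast_nonneg l))
    simpa only [Function.comp_def, Nat.cast_add_one] using
      (hincr one_pos).comp_tendsto (tendsto_add_atTop_nat 1)
  simpa only [covΔ_succ_left_eq_incrVar, div_eq_inv_mul] using
    (((hincr two_pos).sub (hincr one_pos)).sub hshift).const_mul_left 2⁻¹

variable (β φ) in
/-- The function `χ` with `∂²R/∂s∂t (s, t) = s ^ (2 * β - 2) * χ (t / s)` for `0 < s < t`, where `R`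
is `covR β φ`. -/
def mixedDerivProfile (y : ℝ) : ℝ := (2 * β - 1) * deriv φ y - y * deriv (deriv φ) y

lemma exists_covΔ_eq (hφ : ∀ y, 1 < y → DifferentiableAt ℝ φ y)
    (hφ' : ∀ y, 1 < y → DifferentiableAt ℝ (deriv φ) y) {k l : ℕ} (hl : 1 ≤ l) (hlk : l + 2 ≤ k) :
    ∃ s ∈ Ioo (l : ℝ) (l + 1), ∃ t ∈ Ioo (k : ℝ) (k + 1),
      covΔ β φ k l = s ^ (2 * β - 2) * mixedDerivProfile β φ (t / s) := by
  have hl₀ : (1 : ℝ) ≤ l := mod_cast hl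
  have hlk' : (l : ℝ) + 2 ≤ k := mod_cast hlk
  have hdiv {t s : ℝ} (ht : t ∈ Icc (k : ℝ) (k + 1)) (hs : s ∈ Icc (l : ℝ) (l + 1)) :
      0 < s ∧ 1 < t / s := by
    have hs₀ : 0 < s := by linarith [hs.1]
    exact ⟨hs₀, (one_lt_div hs₀).2 (by linarith [ht.1, hs.2])⟩
  have hderiv_t : ∀ t ∈ Icc (k : ℝ) (k + 1), ∀ s ∈ Icc (l : ℝ) (l + 1),
      HasDerivAt (fun t => s ^ (2 * β) * φ (t / s)) (s ^ (2 * β - 1) * deriv φ (t / s)) t := by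
    intro t ht s hs
    obtain ⟨hs₀, hts⟩ := hdiv ht hs
    refine (((hφ _ hts).hasDerivAt.comp t ((hasDerivAt_id t).div_const s)).const_mul
      (s ^ (2 * β))).congr_deriv ?_
    rw [Real.rpow_sub_one hs₀.ne']
    ring
  have hderiv_s : ∀ t ∈ Icc (k : ℝ) (k + 1), ∀ s ∈ Icc (l : ℝ) (l + 1),
      HasDerivAt (fun s => s ^ (2 * β - 1) * deriv φ (t / s))
        (s ^ (2 * β - 2) * mixedDerivProfile β φ (t / s)) s := by
    intro t ht s hs
    obtain ⟨hs₀, hts⟩ := hdiv ht hs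
    have hinv : HasDerivAt (fun s => t / s) (t * -(s ^ 2)⁻¹) s := by
      simpa only [div_eq_mul_inv] using (hasDerivAt_inv hs₀.ne').const_mul t
    refine ((Real.hasDerivAt_rpow_const (p := 2 * β - 1) (.inl hs₀.ne')).mul
      (HasDerivAt.comp (h₂ := deriv φ) s (hφ' _ hts).hasDerivAt hinv)).congr_deriv ?_
    have hpow : s ^ (2 * β - 1) = s ^ (2 * β - 2) * s := by
      rw [← Real.rpow_add_one hs₀.ne']; ring_nf
    rw [mixedDerivProfile, hpow, show 2 * β - 1 - 1 = 2 * β - 2 by ring, Function.comp_apply]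
    field_simp
    ring
  obtain ⟨t, ht, s, hs, heq⟩ := exists_mixed_difference_eq
    (lt_add_one (k : ℝ)) (lt_add_one (l : ℝ))
    (fun s hs t ht => (hderiv_t t ht s hs).continuousAt.continuousWithinAt)
    (fun t ht => hderiv_t t (Ioo_subset_Icc_self ht))
    (fun t ht => hderiv_s t (Ioo_subset_Icc_self ht))
  refine ⟨s, hs, t, ht, ?_⟩
  simp only [add_sub_cancel_left, mul_one] at heq
  rw [← heq, covΔ, covR_comm (k + 1), covR_comm k, covR_comm (k + 1), covR_comm (k : ℝ) l]
  iterate 4 rw [covR_of_le (by linarith) (by linarith)]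

lemma abs_covΔ_le_of_add_two_le {α K : ℝ} (hα : α ≤ 2 * β) (hα₂ : α ≤ 2) (hK : 0 ≤ K)
    (hφ : ∀ y, 1 < y → DifferentiableAt ℝ φ y)
    (hφ' : ∀ y, 1 < y → DifferentiableAt ℝ (deriv φ) y)
    (hχ : ∀ y, 1 < y → |mixedDerivProfile β φ y| ≤ K * (y - 1) ^ (α - 2))
    {k l : ℕ} (hl : 1 ≤ l) (hlk : l + 2 ≤ k) :
    |covΔ β φ k l| ≤ K * ((2 * l : ℝ) ^ (2 * β - α) * ((k - l : ℝ) / 2) ^ (α - 2)) := by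
  have hl₀ : (1 : ℝ) ≤ l := mod_cast hl
  have hlk' : (l : ℝ) + 2 ≤ k := mod_cast hlk
  obtain ⟨s, hs, t, ht, heq⟩ := exists_covΔ_eq (β := β) hφ hφ' hl hlk
  have hs₀ : 0 < s := by linarith [hs.1]
  have hts : 0 < t - s := by linarith [ht.1, hs.2]
  have hhom : s ^ (2 * β - 2) * (t / s - 1) ^ (α - 2) = s ^ (2 * β - α) * (t - s) ^ (α - 2) := by
    rw [div_sub_one hs₀.ne', Real.div_rpow hts.le hs₀.le,
      show 2 * β - α = 2 * β - 2 - (α - 2) by ring, Real.rpow_sub hs₀ (2 * β - 2)]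
    ring
  calc |covΔ β φ k l| = s ^ (2 * β - 2) * |mixedDerivProfile β φ (t / s)| := by
        rw [heq, abs_mul, abs_of_pos (Real.rpow_pos_of_pos hs₀ _)]
    _ ≤ s ^ (2 * β - 2) * (K * (t / s - 1) ^ (α - 2)) := by
        gcongr
        exact hχ _ ((one_lt_div hs₀).2 (by linarith))
    _ = K * (s ^ (2 * β - α) * (t - s) ^ (α - 2)) := by rw [← hhom]; ring
    _ ≤ K * ((2 * l : ℝ) ^ (2 * β - α) * ((k - l : ℝ) / 2) ^ (α - 2)) := by
        gcongr ?_ * (?_ * ?_)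
        · exact Real.rpow_le_rpow hs₀.le (by linarith [hs.2]) (by linarith)
        · exact Real.rpow_le_rpow_of_nonpos (by linarith) (by linarith [ht.1, hs.2])
            (by linarith)

lemma exists_abs_covΔ_le {α c K : ℝ} (hα : α ≤ 2 * β) (hα₂ : α ≤ 2) (hK : 0 ≤ K)
    (hV : incrVar β φ 1 ~[𝓝[>] 1] fun y => c * (y - 1) ^ α)
    (hφ : ∀ y, 1 < y → DifferentiableAt ℝ φ y)
    (hφ' : ∀ y, 1 < y → DifferentiableAt ℝ (deriv φ) y)
    (hχ : ∀ y, 1 < y → |mixedDerivProfile β φ y| ≤ K * (y - 1) ^ (α - 2)) :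
    ∃ C, 0 < C ∧ ∀ k l : ℕ, 1 ≤ l → l < k →
      |covΔ β φ k l| ≤ C * ((l : ℝ) ^ (2 * β - α) * (k - l : ℝ) ^ (α - 2)) := by
  obtain ⟨A, hA, hadj⟩ := bound_of_isBigO_nat_atTop (covΔ_succ_left_isBigO hα hV)
  set B : ℝ := K * (2 ^ (2 * β - α) / 2 ^ (α - 2)) with hB
  have hB₀ : 0 ≤ B := by positivity
  refine ⟨A + B, by positivity, fun k l hl hlk => ?_⟩
  have hl₀ : (0 : ℝ) < l := mod_cast hl
  have hkl : (0 : ℝ) < k - l := sub_pos.2 (mod_cast hlk)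
  have hbound : 0 ≤ (l : ℝ) ^ (2 * β - α) * (k - l : ℝ) ^ (α - 2) := by positivity
  rcases (Nat.succ_le_of_lt hlk).eq_or_lt with rfl | hlk₂
  · calc |covΔ β φ (l + 1) l| ≤ A * (l : ℝ) ^ (2 * β - α) := by
          simpa [Real.abs_rpow_of_nonneg hl₀.le] using hadj (Real.rpow_pos_of_pos hl₀ _).ne'
      _ = A * ((l : ℝ) ^ (2 * β - α) * ((l + 1 : ℕ) - l : ℝ) ^ (α - 2)) := by simp
      _ ≤ _ := mul_le_mul_of_nonneg_right (le_add_of_nonneg_right hB₀) hbound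
  · calc |covΔ β φ k l|
        ≤ K * ((2 * l : ℝ) ^ (2 * β - α) * ((k - l : ℝ) / 2) ^ (α - 2)) :=
          abs_covΔ_le_of_add_two_le hα hα₂ hK hφ hφ' hχ hl hlk₂
      _ = B * ((l : ℝ) ^ (2 * β - α) * (k - l : ℝ) ^ (α - 2)) := by
          rw [hB, Real.mul_rpow zero_le_two hl₀.le, Real.div_rpow hkl.le zero_le_two]
          ring
      _ ≤ _ := mul_le_mul_of_nonneg_right (le_add_of_nonneg_left hA.le) hbound

lemma exists_rpow_le_covΔ_self {α c : ℝ} (hc : c ≠ 0)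
    (hV : incrVar β φ 1 ~[𝓝[>] 1] fun y => c * (y - 1) ^ α)
    (hΔ : ∀ k : ℕ, 1 ≤ k → 0 < covΔ β φ k k) :
    ∃ C, 0 < C ∧ ∀ k : ℕ, 1 ≤ k → (k : ℝ) ^ (2 * β - α) ≤ C * covΔ β φ k k := by
  obtain ⟨C, hC, hbound⟩ := bound_of_isBigO_nat_atTop (covΔ_self_isTheta hc hV).symm.isBigO
  refine ⟨C, hC, fun k hk => ?_⟩
  calc (k : ℝ) ^ (2 * β - α) ≤ ‖(k : ℝ) ^ (2 * β - α)‖ := Real.le_norm_self _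
    _ ≤ C * ‖covΔ β φ k k‖ := hbound (hΔ k hk).ne'
    _ = C * covΔ β φ k k := by rw [Real.norm_of_nonneg (hΔ k hk).le]

lemma exists_abs_covδ_le_of_isEquivalent {α c K : ℝ} (hα : α ≤ 2 * β) (hα₂ : α ≤ 2)
    (hc : c ≠ 0) (hK : 0 ≤ K)
    (hV : incrVar β φ 1 ~[𝓝[>] 1] fun y => c * (y - 1) ^ α)
    (hφ : ∀ y, 1 < y → DifferentiableAt ℝ φ y)
    (hφ' : ∀ y, 1 < y → DifferentiableAt ℝ (deriv φ) y)
    (hχ : ∀ y, 1 < y → |mixedDerivProfile β φ y| ≤ K * (y - 1) ^ (α - 2))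
    (hΔ : ∀ k : ℕ, 1 ≤ k → 0 < covΔ β φ k k) :
    ∃ C, 0 < C ∧ ∀ k l : ℕ, 1 ≤ l → l < k → |covδ β φ k l| ≤ C * (k - l : ℝ) ^ (α - 2) := by
  obtain ⟨A, hA, hupper⟩ := exists_abs_covΔ_le hα hα₂ hK hV hφ hφ' hχ
  obtain ⟨B, hB, hlower⟩ := exists_rpow_le_covΔ_self hc hV hΔ
  refine ⟨A * B, by positivity, fun k l hl hlk => ?_⟩
  have hk : 1 ≤ k := hl.trans hlk.le
  have hlk' : (l : ℝ) ≤ k := mod_cast hlk.le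
  have hvar : (l : ℝ) ^ (2 * β - α) ≤ B * √(covΔ β φ k k * covΔ β φ l l) := by
    have hmono : (l : ℝ) ^ (2 * β - α) ≤ B * covΔ β φ k k :=
      (Real.rpow_le_rpow l.cast_nonneg hlk' (sub_nonneg.2 hα)).trans (hlower k hk)
    rw [← div_le_iff₀' hB]
    refine Real.le_sqrt_of_sq_le ?_
    rw [sq]
    have := hΔ k hk
    gcongr
    · exact (div_le_iff₀' hB).2 hmono
    · exact (div_le_iff₀' hB).2 (hlower l hl)
  have hsqrt : 0 < √(covΔ β φ k k * covΔ β φ l l) :=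
    Real.sqrt_pos.2 (mul_pos (hΔ k hk) (hΔ l hl))
  rw [covδ, abs_div, abs_of_pos hsqrt, div_le_iff₀ hsqrt]
  calc |covΔ β φ k l| ≤ A * ((l : ℝ) ^ (2 * β - α) * (k - l : ℝ) ^ (α - 2)) := hupper k l hl hlk
    _ ≤ A * (B * √(covΔ β φ k k * covΔ β φ l l) * (k - l : ℝ) ^ (α - 2)) := by
        have := sub_nonneg.2 hlk'
        gcongr
    _ = A * B * (k - l : ℝ) ^ (α - 2) * √(covΔ β φ k k * covΔ β φ l l) := by ring

end Covariance

lemma abs_mixedDerivProfile_le {β y : ℝ} {φ : ℝ → ℝ} (hβ₀ : 0 ≤ β) (hβ₁ : β ≤ 1) (hy : 0 ≤ y) :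
    |mixedDerivProfile β φ y| ≤ |deriv φ y| + y * |deriv (deriv φ) y| := by
  have hβ : |2 * β - 1| ≤ 1 := abs_le.2 ⟨by linarith, by linarith⟩
  calc |mixedDerivProfile β φ y| ≤ |2 * β - 1| * |deriv φ y| + y * |deriv (deriv φ) y| := by
        simpa only [mixedDerivProfile, abs_mul, abs_of_nonneg hy] using
          abs_sub ((2 * β - 1) * deriv φ y) (y * deriv (deriv φ) y)
    _ ≤ |deriv φ y| + y * |deriv (deriv φ) y| := by
        gcongr
        exact mul_le_of_le_one_left (abs_nonneg _) hβ

/-! ### Profiles with a power singularity at `1` -/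

section PowerSingularity

variable {lam α : ℝ} {φ ψ : ℝ → ℝ} (hφ : ∀ y, 1 ≤ y → φ y = -lam * (y - 1) ^ α + ψ y)
include hφ

lemma hasDerivAt_of_eq_rpow_add {y : ℝ} (hy : 1 < y) (hψ : DifferentiableAt ℝ ψ y) :
    HasDerivAt φ (-lam * (α * (y - 1) ^ (α - 1)) + deriv ψ y) y := by
  have hpow : HasDerivAt (fun y : ℝ => (y - 1) ^ α) (1 * α * (y - 1) ^ (α - 1)) y :=
    ((hasDerivAt_id y).sub_const 1).rpow_const (.inl (sub_pos.2 hy).ne')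
  rw [one_mul] at hpow
  refine ((hpow.const_mul (-lam)).add hψ.hasDerivAt).congr_of_eventuallyEq ?_
  filter_upwards [Ioi_mem_nhds hy] with z hz using hφ z (le_of_lt hz)

lemma hasDerivAt_deriv_of_eq_rpow_add (hψ : ∀ y, 1 < y → DifferentiableAt ℝ ψ y) {y : ℝ}
    (hy : 1 < y) (hψ' : DifferentiableAt ℝ (deriv ψ) y) :
    HasDerivAt (deriv φ)
      (-lam * (α * ((α - 1) * (y - 1) ^ (α - 2))) + deriv (deriv ψ) y) y := by
  have hpow : HasDerivAt (fun y : ℝ => (y - 1) ^ (α - 1))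
      (1 * (α - 1) * (y - 1) ^ (α - 1 - 1)) y :=
    ((hasDerivAt_id y).sub_const 1).rpow_const (.inl (sub_pos.2 hy).ne')
  rw [one_mul, show α - 1 - 1 = α - 2 by ring] at hpow
  refine (((hpow.const_mul α).const_mul (-lam)).add hψ'.hasDerivAt).congr_of_eventuallyEq ?_
  filter_upwards [Ioi_mem_nhds hy] with z hz using
    (hasDerivAt_of_eq_rpow_add hφ hz (hψ z hz)).deriv

lemma incrVar_one_sub_eq (hα : α ≠ 0) {β y : ℝ} (hy : 1 ≤ y) :
    incrVar β φ 1 y - 2 * lam * (y - 1) ^ α =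
      ψ 1 * (y ^ (2 * β) - 1 - 2 * β * (y - 1)) - 2 * (ψ y - ψ 1 - deriv ψ 1 * (y - 1)) +
        2 * (β * ψ 1 - deriv ψ 1) * (y - 1) := by
  have hφ₁ : φ 1 = ψ 1 := by rw [hφ 1 le_rfl, sub_self, Real.zero_rpow hα]; ring
  rw [incrVar_one hy, hφ₁, hφ y hy]
  ring

lemma incrVar_one_isEquivalent (hlam : lam ≠ 0) (hα₀ : α ≠ 0) (hα₂ : α < 2) {β : ℝ}
    (hψ : ∀ᶠ y in 𝓝 1, DifferentiableAt ℝ ψ y) (hψ' : DifferentiableAt ℝ (deriv ψ) 1)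
    (hψ₁ : 1 ≤ α → deriv ψ 1 = β * ψ 1) :
    incrVar β φ 1 ~[𝓝[>] 1] fun y => 2 * lam * (y - 1) ^ α := by
  have hquad : (fun y : ℝ => (y - 1) ^ 2) =o[𝓝[>] 1] fun y => (y - 1) ^ α := by
    simpa only [Real.rpow_two] using isLittleO_sub_rpow_nhdsGT 1 hα₂
  have hlin : (fun y : ℝ => 2 * (β * ψ 1 - deriv ψ 1) * (y - 1))
      =o[𝓝[>] 1] fun y => (y - 1) ^ α := by
    rcases le_or_gt 1 α with hα | hα
    · simp only [hψ₁ hα, sub_self, mul_zero, zero_mul]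
      exact isLittleO_zero _ _
    · simpa only [Real.rpow_one] using (isLittleO_sub_rpow_nhdsGT 1 hα).const_mul_left _
  have hrem := ((((isBigO_rpow_sub_one_sub_mul (2 * β)).const_mul_left (ψ 1)).sub
    ((isBigO_sub_sub_deriv_mul hψ hψ').const_mul_left 2)).mono nhdsWithin_le_nhds).trans_isLittleO
      hquad
  refine ((hrem.add hlin).const_mul_right (mul_ne_zero two_ne_zero hlam)).congr' ?_ .rfl
  filter_upwards [self_mem_nhdsWithin] with y hy
    using (incrVar_one_sub_eq hφ hα₀ (le_of_lt hy)).symm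

lemma abs_deriv_le_of_eq_rpow_add (hα₀ : 0 ≤ α) (hα₂ : α ≤ 2) {C y : ℝ} (hC : 0 ≤ C)
    (hy : 1 < y) (hy₂ : y ≤ 2) (hψ : DifferentiableAt ℝ ψ y)
    (hψC : |deriv ψ y| ≤ C * y ^ (α - 1)) :
    |deriv φ y| ≤ (|lam| * α + 2 * C) * (y - 1) ^ (α - 2) := by
  have hy₀ : 0 < y - 1 := sub_pos.2 hy
  have hpow : (y - 1) ^ (α - 1) ≤ (y - 1) ^ (α - 2) :=
    Real.rpow_le_rpow_of_exponent_ge hy₀ (by linarith) (by linarith)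
  have hone : 1 ≤ (y - 1) ^ (α - 2) :=
    Real.one_le_rpow_of_pos_of_le_one_of_nonpos hy₀ (by linarith) (by linarith)
  have hy_pow : y ^ (α - 1) ≤ 2 :=
    calc y ^ (α - 1) ≤ y ^ (1 : ℝ) := Real.rpow_le_rpow_of_exponent_le hy.le (by linarith)
      _ ≤ 2 := by rwa [Real.rpow_one]
  calc |deriv φ y| ≤ |lam| * (α * (y - 1) ^ (α - 1)) + |deriv ψ y| := by
        rw [(hasDerivAt_of_eq_rpow_add hφ hy hψ).deriv]
        refine (abs_add_le _ _).trans_eq ?_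
        rw [abs_mul, abs_neg, abs_of_nonneg (a := α * _) (by positivity)]
    _ ≤ |lam| * (α * (y - 1) ^ (α - 2)) + C * (2 * (y - 1) ^ (α - 2)) := by
        gcongr
        exact hψC.trans (mul_le_mul_of_nonneg_left (by linarith) hC)
    _ = (|lam| * α + 2 * C) * (y - 1) ^ (α - 2) := by ring

lemma abs_deriv_deriv_le_of_eq_rpow_add (hα₀ : 0 ≤ α) (hα₂ : α ≤ 2) {C y : ℝ} (hC : 0 ≤ C)
    (hy : 1 < y) (hy₂ : y ≤ 2) (hψ : ∀ y, 1 < y → DifferentiableAt ℝ ψ y)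
    (hψ' : DifferentiableAt ℝ (deriv ψ) y)
    (hψC : |deriv (deriv ψ) y| ≤ C * y⁻¹ * (y - 1) ^ (α - 1)) :
    |deriv (deriv φ) y| ≤ (|lam| * α + C) * (y - 1) ^ (α - 2) := by
  have hy₀ : 0 < y - 1 := sub_pos.2 hy
  have hpow : (y - 1) ^ (α - 1) ≤ (y - 1) ^ (α - 2) :=
    Real.rpow_le_rpow_of_exponent_ge hy₀ (by linarith) (by linarith)
  have hα₁ : |α - 1| ≤ 1 := abs_le.2 ⟨by linarith, by linarith⟩
  calc |deriv (deriv φ) y|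
      ≤ |lam| * (α * (|α - 1| * (y - 1) ^ (α - 2))) + |deriv (deriv ψ) y| := by
        rw [(hasDerivAt_deriv_of_eq_rpow_add hφ hψ hy hψ').deriv]
        refine (abs_add_le _ _).trans_eq ?_
        rw [abs_mul, abs_neg, abs_mul α, abs_mul (α - 1), abs_of_nonneg hα₀,
          abs_of_nonneg (Real.rpow_nonneg hy₀.le _)]
    _ ≤ |lam| * (α * (1 * (y - 1) ^ (α - 2))) + C * 1 * (y - 1) ^ (α - 2) := by
        gcongr
        refine hψC.trans ?_
        gcongr
        exact inv_le_one_of_one_le₀ hy.le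
    _ = (|lam| * α + C) * (y - 1) ^ (α - 2) := by ring

end PowerSingularity

namespace SelfSimilarHyp

variable {β lam α ν : ℝ} {φ ψ : ℝ → ℝ}

lemma alpha_pos (hyp : SelfSimilarHyp β lam α ν φ ψ) : 0 < α := by
  obtain ⟨-, -, hα, -⟩ := hyp
  exact hα.1

lemma alpha_lt_two (hyp : SelfSimilarHyp β lam α ν φ ψ) : α < 2 := by
  obtain ⟨hβ, -, hα, -⟩ := hyp
  linarith [hα.2, hβ.2]

lemma differentiableAt_psi (hyp : SelfSimilarHyp β lam α ν φ ψ) {y : ℝ} (hy : 1 ≤ y) :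
    DifferentiableAt ℝ ψ y := by
  obtain ⟨-, -, -, -, -, ⟨S, -, hS, hψ⟩, -⟩ := hyp
  exact (hψ y (hS hy)).1

lemma differentiableAt_deriv_psi (hyp : SelfSimilarHyp β lam α ν φ ψ) {y : ℝ} (hy : 1 ≤ y) :
    DifferentiableAt ℝ (deriv ψ) y := by
  obtain ⟨-, -, -, -, -, ⟨S, -, hS, hψ⟩, -⟩ := hyp
  exact (hψ y (hS hy)).2

lemma differentiableAt_phi (hyp : SelfSimilarHyp β lam α ν φ ψ) {y : ℝ} (hy : 1 < y) :
    DifferentiableAt ℝ φ y := by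
  obtain ⟨-, -, -, -, hφ, -⟩ := id hyp
  exact (hasDerivAt_of_eq_rpow_add hφ hy (hyp.differentiableAt_psi hy.le)).differentiableAt

lemma differentiableAt_deriv_phi (hyp : SelfSimilarHyp β lam α ν φ ψ) {y : ℝ} (hy : 1 < y) :
    DifferentiableAt ℝ (deriv φ) y := by
  obtain ⟨-, -, -, -, hφ, -⟩ := id hyp
  exact (hasDerivAt_deriv_of_eq_rpow_add hφ (fun y hy => hyp.differentiableAt_psi (le_of_lt hy)) hy
    (hyp.differentiableAt_deriv_psi hy.le)).differentiableAt

lemma incrVar_isEquivalent (hyp : SelfSimilarHyp β lam α ν φ ψ) :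
    incrVar β φ 1 ~[𝓝[>] 1] fun y => 2 * lam * (y - 1) ^ α := by
  obtain ⟨-, hlam, -, -, hφ, ⟨S, hSo, hS, hψ⟩, -, hψ₁, -⟩ := id hyp
  refine incrVar_one_isEquivalent hφ hlam.ne' hyp.alpha_pos.ne' hyp.alpha_lt_two ?_
    (hyp.differentiableAt_deriv_psi le_rfl) hψ₁
  filter_upwards [hSo.mem_nhds (hS self_mem_Ici)] with y hy using (hψ y hy).1

lemma exists_abs_mixedDerivProfile_le_of_le_two (hyp : SelfSimilarHyp β lam α ν φ ψ) :
    ∃ K, 0 ≤ K ∧ ∀ y, 1 < y → y ≤ 2 → |mixedDerivProfile β φ y| ≤ K * (y - 1) ^ (α - 2) := by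
  obtain ⟨hβ, -, -, -, hφ, -, ⟨C, hC, hψ', hψ''⟩, -⟩ := id hyp
  have hα₀ : 0 ≤ α := hyp.alpha_pos.le
  have hα₂ : α ≤ 2 := hyp.alpha_lt_two.le
  refine ⟨|lam| * α + 2 * C + 2 * (|lam| * α + C), by positivity, fun y hy hy₂ => ?_⟩
  calc |mixedDerivProfile β φ y| ≤ |deriv φ y| + y * |deriv (deriv φ) y| :=
        abs_mixedDerivProfile_le hβ.1.le hβ.2.le (by linarith)
    _ ≤ (|lam| * α + 2 * C) * (y - 1) ^ (α - 2) + 2 * ((|lam| * α + C) * (y - 1) ^ (α - 2)) := by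
        gcongr
        · exact abs_deriv_le_of_eq_rpow_add hφ hα₀ hα₂ hC hy hy₂
            (hyp.differentiableAt_psi hy.le) (hψ' y hy)
        · exact abs_deriv_deriv_le_of_eq_rpow_add hφ hα₀ hα₂ hC hy hy₂
            (fun y hy => hyp.differentiableAt_psi (le_of_lt hy))
            (hyp.differentiableAt_deriv_psi hy.le) (hψ'' y hy)
    _ = (|lam| * α + 2 * C + 2 * (|lam| * α + C)) * (y - 1) ^ (α - 2) := by ring

lemma exists_abs_deriv_le_of_two_le (hyp : SelfSimilarHyp β lam α ν φ ψ)
    (hν : α < 1 → 2 ≤ α + ν) :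
    ∃ C, 0 < C ∧ ∀ y, 2 ≤ y → |deriv φ y| ≤ C * (y - 1) ^ (α - 2) ∧
      |deriv (deriv φ) y| ≤ C * (y - 1) ^ (α - 3) := by
  obtain ⟨-, -, -, -, -, -, -, -, C, hC, hbound⟩ := hyp
  refine ⟨C, hC, fun y hy => ?_⟩
  rcases lt_or_ge α 1 with hα | hα
  · have hmono {p q : ℝ} (hpq : p ≤ q) : C * (y - 1) ^ p ≤ C * (y - 1) ^ q :=
      mul_le_mul_of_nonneg_left
        (Real.rpow_le_rpow_of_exponent_le (by linarith) hpq) hC.le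
    obtain ⟨hφ', hφ''⟩ := (hbound y hy).1 hα
    exact ⟨hφ'.trans (hmono (by linarith [hν hα])), hφ''.trans (hmono (by linarith [hν hα]))⟩
  · exact (hbound y hy).2 hα

lemma exists_abs_mixedDerivProfile_le_of_two_le (hyp : SelfSimilarHyp β lam α ν φ ψ)
    (hν : α < 1 → 2 ≤ α + ν) :
    ∃ K, 0 ≤ K ∧ ∀ y, 2 ≤ y → |mixedDerivProfile β φ y| ≤ K * (y - 1) ^ (α - 2) := by
  obtain ⟨C, hC, hbound⟩ := hyp.exists_abs_deriv_le_of_two_le hν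
  obtain ⟨hβ, -⟩ := hyp
  refine ⟨3 * C, by positivity, fun y hy => ?_⟩
  have hy₀ : 0 < y - 1 := by linarith
  calc |mixedDerivProfile β φ y| ≤ |deriv φ y| + y * |deriv (deriv φ) y| :=
        abs_mixedDerivProfile_le hβ.1.le hβ.2.le (by linarith)
    _ ≤ C * (y - 1) ^ (α - 2) + 2 * (y - 1) * (C * (y - 1) ^ (α - 3)) := by
        gcongr
        exacts [(hbound y hy).1, by linarith, (hbound y hy).2]
    _ = 3 * C * (y - 1) ^ (α - 2) := by
        rw [show α - 2 = α - 3 + 1 by ring, Real.rpow_add_one hy₀.ne']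
        ring

lemma exists_abs_mixedDerivProfile_le (hyp : SelfSimilarHyp β lam α ν φ ψ)
    (hν : α < 1 → 2 ≤ α + ν) :
    ∃ K, 0 ≤ K ∧ ∀ y, 1 < y → |mixedDerivProfile β φ y| ≤ K * (y - 1) ^ (α - 2) := by
  obtain ⟨A, hA, hnear⟩ := hyp.exists_abs_mixedDerivProfile_le_of_le_two
  obtain ⟨B, hB, hfar⟩ := hyp.exists_abs_mixedDerivProfile_le_of_two_le hν
  refine ⟨A + B, by positivity, fun y hy => ?_⟩
  have hpow : 0 ≤ (y - 1) ^ (α - 2) := Real.rpow_nonneg (sub_pos.2 hy).le _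
  rcases le_total y 2 with hy₂ | hy₂
  · exact (hnear y hy hy₂).trans (mul_le_mul_of_nonneg_right (le_add_of_nonneg_right hB) hpow)
  · exact (hfar y hy₂).trans (mul_le_mul_of_nonneg_right (le_add_of_nonneg_left hA) hpow)

lemma exists_abs_covδ_le (hyp : SelfSimilarHyp β lam α ν φ ψ)
    (hΔ : ∀ k : ℕ, 1 ≤ k → 0 < covΔ β φ k k) (hν : α < 1 → 2 ≤ α + ν) :
    ∃ C, 0 < C ∧ ∀ k l : ℕ, 1 ≤ l → l < k → |covδ β φ k l| ≤ C * (k - l : ℝ) ^ (α - 2) := by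
  obtain ⟨K, hK, hχ⟩ := hyp.exists_abs_mixedDerivProfile_le hν
  obtain ⟨-, hlam, hα, -⟩ := id hyp
  exact exists_abs_covδ_le_of_isEquivalent hα.2 hyp.alpha_lt_two.le
    (mul_ne_zero two_ne_zero hlam.ne') hK hyp.incrVar_isEquivalent
    (fun _ => hyp.differentiableAt_phi) (fun _ => hyp.differentiableAt_deriv_phi) hχ hΔ

end SelfSimilarHyp

theorem covδ_le_aFun_general (β lam α ν : ℝ) (φ ψ : ℝ → ℝ)
    (hyp : SelfSimilarHyp β lam α ν φ ψ)
    (hΔ : ∀ k : ℕ, 1 ≤ k → 0 < covΔ β φ k k)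
    (hα : α ≠ 1) (hν : α < 1 → 2 ≤ α + ν) :
    ∃ C : ℝ, 0 < C ∧ ∀ k l : ℕ, 1 ≤ k → 1 ≤ l →
      |covδ β φ k l| ≤ C * |aFun α ((k : ℤ) - l)| := by
  have hα₀ : 0 < α := hyp.alpha_pos
  obtain ⟨A, hA, hδ⟩ := hyp.exists_abs_covδ_le hΔ hν
  obtain ⟨B, hB, ha⟩ := exists_rpow_le_abs_aFun hα₀ hyp.alpha_lt_two.le hα
  have hlt {k l : ℕ} (hl : 1 ≤ l) (hlk : l < k) :
      |covδ β φ k l| ≤ A * B * |aFun α ((k : ℤ) - l)| := by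
    have hkl := ha ((k : ℤ) - l) (by omega)
    push_cast at hkl
    calc |covδ β φ k l| ≤ A * (k - l : ℝ) ^ (α - 2) := hδ k l hl hlk
      _ ≤ A * (B * |aFun α ((k : ℤ) - l)|) := by gcongr
      _ = A * B * |aFun α ((k : ℤ) - l)| := by ring
  refine ⟨A * B + 1, by positivity, fun k l hk hl => ?_⟩
  rcases lt_trichotomy l k with hlk | rfl | hkl
  · exact (hlt hl hlk).trans (by gcongr; linarith)
  · rw [covδ_self (hΔ l hk), sub_self, aFun_zero hα₀.ne', abs_one, mul_one]
    linarith [mul_pos hA hB]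
  · rw [covδ_comm, ← neg_sub, aFun_neg]
    exact (hlt hk hkl).trans (by gcongr; linarith)

/-- if `α < 1 and α + ν > 2`, or `1 < α < 3/2`, then there is a
constant `C > 0` with `|δ_{kl}| ≤ C |a_α(k−l)|` for all integers `k, l ≥ 1`. -/
theorem covδ_le_aFun (β lam α ν : ℝ) (φ ψ : ℝ → ℝ)
    (hyp : SelfSimilarHyp β lam α ν φ ψ)
    (hΔ : ∀ k : ℕ, 0 < covΔ β φ k k)
    (hcase : (α < 1 ∧ 2 < α + ν) ∨ (1 < α ∧ α < 3 / 2)) :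
    ∃ C : ℝ, 0 < C ∧ ∀ k l : ℕ, 1 ≤ k → 1 ≤ l →
      |covδ β φ k l| ≤ C * |aFun α ((k : ℤ) - l)| := by
  refine covδ_le_aFun_general β lam α ν φ ψ hyp (fun k _ => hΔ k) ?_ ?_ <;> grind
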